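/- Let α ∈ (0,1), p > 1 real, c > 0, and let φ be an even, nontrivial steady solution with speed c (for either nonlinearity, case abs or case sgn) that is monotonically increasing on (−π, 0). (a) If φ is continuously differentiable on ℝ, then φ′(x) > 0 and n′(φ(x)) < c for every x ∈ (−π, 0). (b) If in addition φ is twice continuously differentiable on a neighbourhood of 0 and on a neighbourhood of −π, then n′(φ(x)) < c for every x ∈ ℝ, φ″(0) < 0, and φ″(−π) > 0. (c) Conversely, if φ is merely continuous and satisfies n′(φ(x)) ≤ c for every x ∈ ℝ, then φ is strictly increasing on (−π, 0). -/

import Mathlib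

open Real MeasureTheory Set Filter Topology

/-- The periodic convolution kernel `K_α`: equal to the explicit integral
representation for `x ∉ 2πℤ` and to `0` on `2πℤ`. -/
noncomputable def Kker (α x : ℝ) : ℝ :=
  letI : Decidable (∃ k : ℤ, x = 2 * π * k) := Classical.propDecidable _
  if ∃ k : ℤ, x = 2 * π * k then 0
  else (1 / (π * Real.Gamma α)) *
    ∫ t in Set.Ioi (0:ℝ),
      t ^ (α - 1) * (Real.exp t * Real.cos x - 1) /
        (1 - 2 * Real.exp t * Real.cos x + Real.exp (2 * t))

/-- A steady travelling-wave solution of speed `c` with nonlinearity `n`: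
a continuous, `2π`-periodic, zero-mean function `φ` satisfying the steady
convolution equation. -/
def IsSteadySolution (α c : ℝ) (n φ : ℝ → ℝ) : Prop :=
  Continuous φ ∧ Function.Periodic φ (2 * π) ∧
  (∫ y in (-π)..π, φ y) = 0 ∧
  ∀ x : ℝ, (∫ y in (-π)..π, Kker α (x - y) * φ y) =
    c * φ x - n (φ x) + (1 / (2 * π)) * ∫ y in (-π)..π, n (φ y)

/-- Case abs nonlinearity `n(x) = |x|^p`. -/
noncomputable def nAbs (p x : ℝ) : ℝ := |x| ^ p
/-- Case sgn nonlinearity `n(x) = x·|x|^(p-1)`. -/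
noncomputable def nSgn (p x : ℝ) : ℝ := x * |x| ^ (p - 1)
/-- Derivative of the case abs nonlinearity, `n′(x) = p·x·|x|^(p-2)`. -/
noncomputable def nAbs' (p x : ℝ) : ℝ := p * x * |x| ^ (p - 2)
/-- Derivative of the case sgn nonlinearity, `n′(x) = p·|x|^(p-1)`. -/
noncomputable def nSgn' (p x : ℝ) : ℝ := p * |x| ^ (p - 1)

/-! For `0 < r < 1` the series `∑ rᵏ cos kx` (`k ≥ 1`) is increasing in `cos x`, and `K_α` is a
superposition of such series with positive weights; hence `K_α - κ cos` is still increasing in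
`cos x` for some `κ > 0`. Reflecting the convolution integral in the midpoint of two points of
`[-π, 0]` shows that convolution with such a kernel preserves functions increasing in `cos x`. For a
steady solution `φ` the convolution `(K_α - κ cos) * φ` is, up to a constant, `c φ - n ∘ φ - m cos`
with `m = κ ∫ φ cos > 0`, so `c φ - n ∘ φ` grows at least as fast as `m cos` on `[-π, 0]`.
Differentiating once in the interior, and twice at the endpoints where `φ′` vanishes, gives all the
signs. -/

section PoissonFactor

/-- The denominator of the integrand of `K_α`, with `u` standing for `cos x`. -/
noncomputable def poissonDenom (t u : ℝ) : ℝ := 1 - 2 * exp t * u + exp (2 * t)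

/-- The integrand of `K_α` without the weight `t ^ (α - 1)`, with `u` standing for `cos x`. It is
`∑ e⁻ᵏᵗ cos kx` over `k ≥ 1`, half of the Poisson kernel of radius `e⁻ᵗ` without its mean. -/
noncomputable def poissonFactor (t u : ℝ) : ℝ := (exp t * u - 1) / poissonDenom t u

variable {θ t u v : ℝ}

lemma poissonDenom_eq_exp_mul_cosh : poissonDenom t u = exp t * (2 * (cosh t - u)) := by
  have hexp : exp t * exp (-t) = 1 := by rw [← exp_add, add_neg_cancel, exp_zero]
  rw [poissonDenom, cosh_eq, two_mul t, exp_add]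
  linear_combination -hexp

lemma one_add_sq_div_two_le_cosh (t : ℝ) : 1 + t ^ 2 / 2 ≤ cosh t := by
  have hsinh : (t / 2) ^ 2 ≤ sinh (t / 2) ^ 2 := by
    rw [sq_le_sq, abs_sinh]
    exact self_le_sinh_iff.2 (abs_nonneg _)
  have hcosh : cosh t = 1 + 2 * sinh (t / 2) ^ 2 := by
    rw [← mul_div_cancel₀ t two_ne_zero, cosh_two_mul, cosh_sq]
    ring_nf
  linarith

lemma exp_mul_le_poissonDenom (t u : ℝ) : exp t * (t ^ 2 + 2 * (1 - u)) ≤ poissonDenom t u := by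
  rw [poissonDenom_eq_exp_mul_cosh]
  gcongr
  linarith [one_add_sq_div_two_le_cosh t]

lemma poissonDenom_pos (hu : u < 1) : 0 < poissonDenom t u := by
  refine lt_of_lt_of_le ?_ (exp_mul_le_poissonDenom t u)
  have : 0 < 1 - u := sub_pos.2 hu
  positivity

lemma poissonDenom_le (hu : -1 ≤ u) : poissonDenom t u ≤ (1 + exp t) ^ 2 := by
  rw [poissonDenom, two_mul t, exp_add]
  nlinarith [exp_pos t]

lemma abs_poissonFactor_le (hu : u ∈ Ico (-1) 1) :
    |poissonFactor t u| ≤ poissonDenom t u ^ (-(1 / 2) : ℝ) := by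
  have hD : 0 < poissonDenom t u := poissonDenom_pos hu.2
  have hnum : |exp t * u - 1| ≤ √(poissonDenom t u) := by
    refine abs_le_sqrt ?_
    have hgap : poissonDenom t u - (exp t * u - 1) ^ 2 = exp t ^ 2 * (1 - u ^ 2) := by
      rw [poissonDenom, two_mul t, exp_add]
      ring
    have : 0 ≤ 1 - u ^ 2 := by nlinarith [hu.1, hu.2]
    nlinarith [sq_nonneg (exp t)]
  rw [poissonFactor, abs_div, abs_of_pos hD, rpow_neg hD.le, ← sqrt_eq_rpow, ← one_div,
    ← sqrt_div_self']
  gcongr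

/-- Interpolating between `t ^ 2` and `2 * (1 - u)` trades integrability at `t = 0` against the
order of the singularity at `u = 1`. -/
lemma exp_mul_rpow_le_poissonDenom (hθ : θ ∈ Icc 0 1) (hu : u < 1) :
    exp t * ((t ^ 2) ^ θ * (2 * (1 - u)) ^ (1 - θ)) ≤ poissonDenom t u := by
  have hs : 0 < 2 * (1 - u) := by linarith
  have hamgm := geom_mean_le_arith_mean2_weighted hθ.1 (sub_nonneg.2 hθ.2) (sq_nonneg t) hs.le
    (add_sub_cancel θ 1)
  have hweights : θ * t ^ 2 + (1 - θ) * (2 * (1 - u)) ≤ t ^ 2 + 2 * (1 - u) := by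
    nlinarith [hθ.1, hθ.2, sq_nonneg t]
  refine le_trans ?_ (exp_mul_le_poissonDenom t u)
  gcongr
  exact hamgm.trans hweights

lemma norm_rpow_mul_poissonFactor_le (α : ℝ) (hθ : θ ∈ Icc 0 1) (ht : 0 < t)
    (hu : u ∈ Ico (-1) 1) :
    ‖t ^ (α - 1) * poissonFactor t u‖ ≤
      t ^ (α - 1 - θ) * exp (-(1 / 2) * t) * (2 * (1 - u)) ^ ((θ - 1) / 2) := by
  have hs : 0 < 2 * (1 - u) := by linarith [hu.2]
  have hfactor : |poissonFactor t u| ≤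
      exp (-(1 / 2) * t) * (t ^ (-θ) * (2 * (1 - u)) ^ ((θ - 1) / 2)) :=
    calc |poissonFactor t u| ≤ poissonDenom t u ^ (-(1 / 2) : ℝ) := abs_poissonFactor_le hu
      _ ≤ (exp t * ((t ^ 2) ^ θ * (2 * (1 - u)) ^ (1 - θ))) ^ (-(1 / 2) : ℝ) :=
        rpow_le_rpow_of_nonpos (by positivity) (exp_mul_rpow_le_poissonDenom hθ hu.2)
          (by norm_num)
      _ = exp (-(1 / 2) * t) * (t ^ (-θ) * (2 * (1 - u)) ^ ((θ - 1) / 2)) := by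
        rw [mul_rpow (exp_pos t).le (by positivity), mul_rpow (by positivity) (by positivity),
          ← exp_mul, ← rpow_mul (sq_nonneg t), ← rpow_natCast_mul ht.le, ← rpow_mul hs.le]
        rw [show (1 - θ) * -(1 / 2) = (θ - 1) / 2 by ring,
          show ((2 : ℕ) : ℝ) * (θ * -(1 / 2)) = -θ by push_cast; ring, mul_comm t]
  rw [norm_mul, norm_of_nonneg (rpow_nonneg ht.le _), norm_eq_abs]
  calc t ^ (α - 1) * |poissonFactor t u|
      ≤ t ^ (α - 1) * (exp (-(1 / 2) * t) * (t ^ (-θ) * (2 * (1 - u)) ^ ((θ - 1) / 2))) := by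
        gcongr
    _ = t ^ (α - 1 - θ) * exp (-(1 / 2) * t) * (2 * (1 - u)) ^ ((θ - 1) / 2) := by
        rw [sub_eq_add_neg (α - 1), rpow_add ht]
        ring

lemma poissonFactor_sub (hu : u < 1) (hv : v < 1) :
    poissonFactor t v - poissonFactor t u =
      (v - u) * (exp t * (exp t ^ 2 - 1) / (poissonDenom t v * poissonDenom t u)) := by
  have hDu : poissonDenom t u ≠ 0 := (poissonDenom_pos hu).ne'
  have hDv : poissonDenom t v ≠ 0 := (poissonDenom_pos hv).ne'
  rw [poissonFactor, poissonFactor, div_sub_div _ _ hDv hDu, ← mul_div_assoc]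
  congr 1
  rw [poissonDenom, poissonDenom, two_mul t, exp_add]
  ring

lemma mul_sub_le_poissonFactor_sub (ht : 0 ≤ t) (hu : u ∈ Ico (-1) 1) (hv : v ∈ Ico (-1) 1)
    (huv : u ≤ v) :
    (v - u) * (exp t * (exp t ^ 2 - 1) / (1 + exp t) ^ 4) ≤
      poissonFactor t v - poissonFactor t u := by
  have hnum : 0 ≤ exp t ^ 2 - 1 := sub_nonneg.2 (one_le_pow₀ (one_le_exp ht))
  have hDu : 0 < poissonDenom t u := poissonDenom_pos hu.2
  have hDv : 0 < poissonDenom t v := poissonDenom_pos hv.2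
  rw [poissonFactor_sub hu.2 hv.2]
  have := sub_nonneg.2 huv
  gcongr
  calc poissonDenom t v * poissonDenom t u ≤ (1 + exp t) ^ 2 * (1 + exp t) ^ 2 :=
        mul_le_mul (poissonDenom_le hv.1) (poissonDenom_le hu.1) hDu.le (by positivity)
    _ = (1 + exp t) ^ 4 := by ring

end PoissonFactor

section Kernel

variable {α θ u v x : ℝ}

lemma integrableOn_rpow_mul_exp_neg_mul {s b : ℝ} (hs : -1 < s) (hb : 0 < b) :
    IntegrableOn (fun t : ℝ ↦ t ^ s * exp (-b * t)) (Ioi 0) := by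
  simpa only [rpow_one] using integrableOn_rpow_mul_exp_neg_mul_rpow hs one_pos hb

lemma integrableOn_rpow_mul_poissonFactor (hα : 0 < α) (hu : u ∈ Ico (-1) 1) :
    IntegrableOn (fun t ↦ t ^ (α - 1) * poissonFactor t u) (Ioi 0) := by
  have hdom := (integrableOn_rpow_mul_exp_neg_mul (s := α - 1 - 0) (b := 1 / 2) (by linarith)
    one_half_pos).mul_const ((2 * (1 - u)) ^ ((0 - 1 : ℝ) / 2))
  refine hdom.mono' ?_ ((ae_restrict_iff' measurableSet_Ioi).2 <| .of_forall fun t ht ↦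
    norm_rpow_mul_poissonFactor_le α (left_mem_Icc.2 zero_le_one) ht hu)
  unfold poissonFactor poissonDenom
  fun_prop

lemma exists_int_eq_two_pi_mul_iff_cos_eq_one (x : ℝ) : (∃ k : ℤ, x = 2 * π * k) ↔ cos x = 1 := by
  rw [cos_eq_one_iff]
  exact exists_congr fun k ↦ by rw [eq_comm, mul_comm]

lemma Kker_of_cos_ne_one (hx : cos x ≠ 1) :
    Kker α x = 1 / (π * Gamma α) * ∫ t in Ioi 0, t ^ (α - 1) * poissonFactor t (cos x) := by
  rw [Kker, if_neg (mt (exists_int_eq_two_pi_mul_iff_cos_eq_one x).1 hx)]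
  simp only [poissonFactor, poissonDenom, mul_div_assoc]

lemma Kker_of_cos_eq_one (hx : cos x = 1) : Kker α x = 0 := by
  rw [Kker, if_pos ((exists_int_eq_two_pi_mul_iff_cos_eq_one x).2 hx)]

lemma Kker_congr_of_cos_eq (h : cos u = cos v) : Kker α u = Kker α v := by
  by_cases hu : cos u = 1
  · rw [Kker_of_cos_eq_one hu, Kker_of_cos_eq_one (h ▸ hu)]
  · rw [Kker_of_cos_ne_one hu, Kker_of_cos_ne_one (h ▸ hu), h]

lemma even_Kker (α : ℝ) : (Kker α).Even := fun x ↦ Kker_congr_of_cos_eq (cos_neg x)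

lemma periodic_Kker (α : ℝ) : Function.Periodic (Kker α) (2 * π) := fun x ↦
  Kker_congr_of_cos_eq (cos_add_two_pi x)

lemma measurable_Kker (α : ℝ) : Measurable (Kker α) := by
  have hite : Kker α = fun x ↦ if cos x = 1 then 0 else
      1 / (π * Gamma α) * ∫ t in Ioi 0, t ^ (α - 1) * poissonFactor t (cos x) := by
    funext x
    split_ifs with hx
    exacts [Kker_of_cos_eq_one hx, Kker_of_cos_ne_one hx]
  have hintegrand : Measurable
      (Function.uncurry fun x t : ℝ ↦ t ^ (α - 1) * poissonFactor t (cos x)) := by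
    unfold poissonFactor poissonDenom Function.uncurry
    fun_prop
  rw [hite]
  exact Measurable.ite (measurable_cos (measurableSet_singleton 1)) measurable_const
    (hintegrand.stronglyMeasurable.integral_prod_right.measurable.const_mul _)

lemma cos_mem_Ico (hx : cos x ≠ 1) : cos x ∈ Ico (-1) 1 :=
  ⟨neg_one_le_cos x, (cos_le_one x).lt_of_ne hx⟩

lemma norm_Kker_le (hθ : θ ∈ Icc 0 1) (hθα : θ < α) (hx : cos x ≠ 1) :
    ‖Kker α x‖ ≤ |1 / (π * Gamma α)| *
      ((∫ t in Ioi 0, t ^ (α - 1 - θ) * exp (-(1 / 2) * t)) *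
        (2 * (1 - cos x)) ^ ((θ - 1) / 2)) := by
  rw [Kker_of_cos_ne_one hx, norm_mul, norm_eq_abs, ← integral_mul_const]
  gcongr
  exact norm_integral_le_of_norm_le
    ((integrableOn_rpow_mul_exp_neg_mul (by linarith) one_half_pos).mul_const _)
    ((ae_restrict_iff' measurableSet_Ioi).2 <| .of_forall fun t ht ↦
      norm_rpow_mul_poissonFactor_le α hθ ht (cos_mem_Ico hx))

lemma sq_le_two_mul_one_sub_cos (hx : |x| ≤ π) : (2 / π * x) ^ 2 ≤ 2 * (1 - cos x) :=
  calc (2 / π * x) ^ 2 = 2 * (2 / π ^ 2 * x ^ 2) := by ring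
    _ ≤ 2 * (1 - cos x) := by linarith [cos_le_one_sub_mul_cos_sq hx]

lemma exists_norm_Kker_le_mul_rpow (hθ : θ ∈ Icc 0 1) (hθα : θ < α) :
    ∃ C, ∀ x ∈ Ioc 0 π, ‖Kker α x‖ ≤ C * x ^ (θ - 1) := by
  set I := ∫ t in Ioi (0 : ℝ), t ^ (α - 1 - θ) * exp (-(1 / 2) * t)
  have hI : 0 ≤ I := setIntegral_nonneg measurableSet_Ioi fun t ht ↦
    mul_nonneg (rpow_nonneg (mem_Ioi.1 ht).le _) (exp_nonneg _)
  refine ⟨|1 / (π * Gamma α)| * (I * (2 / π) ^ (θ - 1)), fun x hx ↦ ?_⟩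
  have hscaled : 0 < 2 / π * x := mul_pos (by positivity) hx.1
  have hcos := sq_le_two_mul_one_sub_cos (abs_le.2 ⟨by linarith [hx.1, pi_pos], hx.2⟩)
  have hcos_ne : cos x ≠ 1 := fun h ↦ by
    rw [h] at hcos
    nlinarith
  calc ‖Kker α x‖
      ≤ |1 / (π * Gamma α)| * (I * (2 * (1 - cos x)) ^ ((θ - 1) / 2)) :=
        norm_Kker_le hθ hθα hcos_ne
    _ ≤ |1 / (π * Gamma α)| * (I * ((2 / π * x) ^ 2) ^ ((θ - 1) / 2)) := by
        have := rpow_le_rpow_of_nonpos (by positivity) hcos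
          (by linarith [hθ.2] : (θ - 1) / 2 ≤ 0)
        gcongr
    _ = |1 / (π * Gamma α)| * (I * (2 / π) ^ (θ - 1)) * x ^ (θ - 1) := by
        rw [← rpow_natCast_mul hscaled.le, Nat.cast_ofNat, mul_div_cancel₀ _ two_ne_zero,
          mul_rpow (by positivity) hx.1.le]
        ring

lemma intervalIntegrable_Kker (hα : 0 < α) (a b : ℝ) :
    IntervalIntegrable (Kker α) volume a b := by
  obtain ⟨θ, hθ0, hθ⟩ := exists_between (lt_min hα one_pos)
  obtain ⟨hθα, hθ1⟩ := lt_min_iff.1 hθ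
  obtain ⟨C, hC⟩ := exists_norm_Kker_le_mul_rpow ⟨hθ0.le, hθ1.le⟩ hθα
  have hright : IntervalIntegrable (Kker α) volume 0 π := by
    refine ((intervalIntegral.intervalIntegrable_rpow' (r := θ - 1)
      (by linarith)).const_mul C).mono_fun'
      (measurable_Kker α).aestronglyMeasurable ?_
    rw [uIoc_of_le pi_pos.le]
    exact (ae_restrict_iff' measurableSet_Ioc).2 (.of_forall hC)
  have hleft : IntervalIntegrable (Kker α) volume (-π) 0 := by
    simpa only [even_Kker α _, neg_zero] using
      ((IntervalIntegrable.iff_comp_neg (f := Kker α) (a := 0) (b := π)).1 hright).symm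
  refine (periodic_Kker α).intervalIntegrable two_pi_pos.ne' (t := -π) ?_ a b
  rw [show -π + 2 * π = π by ring]
  exact hleft.trans hright

/-- The weight which bounds the slope of the integrand of `K_α`, as a function of `cos x`,
from below. -/
noncomputable def slopeWeight (α t : ℝ) : ℝ :=
  t ^ (α - 1) * (exp t * (exp t ^ 2 - 1) / (1 + exp t) ^ 4)

lemma slopeWeight_pos (α : ℝ) {t : ℝ} (ht : 0 < t) : 0 < slopeWeight α t := by
  have : 0 < exp t ^ 2 - 1 := sub_pos.2 (one_lt_pow₀ (one_lt_exp_iff.2 ht) two_ne_zero)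
  rw [slopeWeight]
  positivity

lemma slopeWeight_le (α : ℝ) {t : ℝ} (ht : 0 ≤ t) :
    slopeWeight α t ≤ t ^ (α - 1) * exp (-1 * t) := by
  rw [slopeWeight, neg_one_mul, exp_neg, inv_eq_one_div]
  gcongr ?_ * ?_
  rw [div_le_div_iff₀ (by positivity) (exp_pos t)]
  nlinarith [exp_pos t, pow_pos (exp_pos t) 2, pow_pos (exp_pos t) 3]

lemma integrableOn_slopeWeight (hα : 0 < α) : IntegrableOn (slopeWeight α) (Ioi 0) := by
  refine (integrableOn_rpow_mul_exp_neg_mul (s := α - 1) (by linarith) one_pos).mono' ?_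
    ((ae_restrict_iff' measurableSet_Ioi).2 <| .of_forall fun t ht ↦ ?_)
  · unfold slopeWeight
    fun_prop
  · rw [norm_of_nonneg (slopeWeight_pos α ht).le]
    exact slopeWeight_le α (mem_Ioi.1 ht).le

lemma integral_slopeWeight_pos (hα : 0 < α) : 0 < ∫ t in Ioi 0, slopeWeight α t := by
  rw [setIntegral_pos_iff_support_of_nonneg_ae
    ((ae_restrict_iff' measurableSet_Ioi).2 <| .of_forall fun t ht ↦ (slopeWeight_pos α ht).le)
    (integrableOn_slopeWeight hα)]
  have hsupport : Ioi 0 ⊆ Function.support (slopeWeight α) ∩ Ioi 0 := fun t ht ↦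
    ⟨(slopeWeight_pos α ht).ne', ht⟩
  exact lt_of_lt_of_le (by simp) (measure_mono hsupport)

lemma cos_sub_cos_mul_le_integral_sub (hα : 0 < α) (hu : cos u ≠ 1) (hv : cos v ≠ 1)
    (huv : cos u ≤ cos v) :
    (cos v - cos u) * ∫ t in Ioi 0, slopeWeight α t ≤
      (∫ t in Ioi 0, t ^ (α - 1) * poissonFactor t (cos v)) -
        ∫ t in Ioi 0, t ^ (α - 1) * poissonFactor t (cos u) := by
  have hintu := integrableOn_rpow_mul_poissonFactor hα (cos_mem_Ico hu)
  have hintv := integrableOn_rpow_mul_poissonFactor hα (cos_mem_Ico hv)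
  rw [← integral_const_mul, ← integral_sub hintv hintu]
  refine setIntegral_mono_on ((integrableOn_slopeWeight hα).const_mul _) (hintv.sub hintu)
    measurableSet_Ioi fun t ht ↦ ?_
  have ht0 : 0 ≤ t := (mem_Ioi.1 ht).le
  rw [slopeWeight, mul_left_comm, ← mul_sub]
  gcongr
  exact mul_sub_le_poissonFactor_sub ht0 (cos_mem_Ico hu) (cos_mem_Ico hv) huv

lemma exists_monovaryOn_Kker_sub_cos (hα : 0 < α) :
    ∃ κ > 0, MonovaryOn (fun x ↦ Kker α x - κ * cos x) cos {x | cos x ≠ 1} := by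
  have hconst : 0 < 1 / (π * Gamma α) := by
    have := Gamma_pos_of_pos hα
    positivity
  refine ⟨1 / (π * Gamma α) * ∫ t in Ioi 0, slopeWeight α t,
    mul_pos hconst (integral_slopeWeight_pos hα), fun u hu v hv huv ↦ ?_⟩
  have hslope := mul_le_mul_of_nonneg_left
    (cos_sub_cos_mul_le_integral_sub hα hu hv huv.le) hconst.le
  simp only [Kker_of_cos_ne_one hu, Kker_of_cos_ne_one hv]
  linarith

end Kernel

section IncreasingInCos

variable {f : ℝ → ℝ} {a b u v : ℝ}

lemma monotoneOn_Icc_of_monotoneOn_Ioo (hab : a < b) (hf : Continuous f)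
    (hmono : MonotoneOn f (Ioo a b)) : MonotoneOn f (Icc a b) := by
  have hIco : MonotoneOn f (Ico a b) := by
    rw [← Ioo_insert_left hab]
    refine hmono.insert_of_continuousWithinAt ?_ hf.continuousWithinAt
    rw [← mem_closure_iff_clusterPt, closure_Ioo hab.ne]
    exact left_mem_Icc.2 hab.le
  rw [← Ico_insert_right hab.le]
  refine hIco.insert_of_continuousWithinAt ?_ hf.continuousWithinAt
  rw [← mem_closure_iff_clusterPt, closure_Ico hab.ne]
  exact right_mem_Icc.2 hab.le

lemma cos_neg_arccos_cos (x : ℝ) : cos (-arccos (cos x)) = cos x := by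
  rw [cos_neg, cos_arccos (neg_one_le_cos x) (cos_le_one x)]

lemma neg_arccos_mem_Icc (x : ℝ) : -arccos x ∈ Icc (-π) 0 :=
  ⟨neg_le_neg (arccos_le_pi x), neg_nonpos.2 (arccos_nonneg x)⟩

lemma apply_eq_of_cos_eq (heven : f.Even) (hper : Function.Periodic f (2 * π))
    (h : cos u = cos v) : f u = f v := by
  obtain ⟨k, rfl | rfl⟩ := cos_eq_cos_iff.1 h
  · rw [mul_right_comm, mul_comm, add_comm, hper.int_mul k]
  · rw [mul_right_comm, mul_comm, sub_eq_neg_add, hper.int_mul k, heven]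

lemma apply_le_apply_of_cos_le (heven : f.Even) (hper : Function.Periodic f (2 * π))
    (hmono : MonotoneOn f (Icc (-π) 0)) (h : cos u ≤ cos v) : f u ≤ f v := by
  rw [apply_eq_of_cos_eq heven hper (cos_neg_arccos_cos u).symm,
    apply_eq_of_cos_eq heven hper (cos_neg_arccos_cos v).symm]
  exact hmono (neg_arccos_mem_Icc _) (neg_arccos_mem_Icc _) (neg_le_neg (arccos_le_arccos h))

lemma strictMonoOn_cos_Icc_neg_pi_zero : StrictMonoOn cos (Icc (-π) 0) := fun a ha b hb hab ↦ by
  rw [← cos_neg a, ← cos_neg b]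
  exact cos_lt_cos_of_nonneg_of_le_pi (neg_nonneg.2 hb.2) (neg_le.1 ha.1) (neg_lt_neg hab)

lemma integral_cos_mul_pos (hf : Continuous f) (hmono : Monovary f cos)
    (hne : ∃ x ∈ Icc (-π) π, f x ≠ f (π / 2)) : 0 < ∫ y in (-π)..π, cos y * f y := by
  have hcenter : ∫ y in (-π)..π, cos y * f y = ∫ y in (-π)..π, cos y * (f y - f (π / 2)) := by
    simp_rw [mul_sub]
    rw [intervalIntegral.integral_sub (Continuous.intervalIntegrable (by fun_prop) _ _)
      (Continuous.intervalIntegrable (by fun_prop) _ _), intervalIntegral.integral_mul_const,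
      integral_cos, sin_neg, sin_pi]
    ring
  have hnonneg (y : ℝ) : 0 ≤ cos y * (f y - f (π / 2)) := by
    simpa only [cos_pi_div_two, sub_zero, mul_comm] using hmono.sub_mul_sub_nonneg (π / 2) y
  rw [hcenter]
  refine intervalIntegral.integral_pos (by linarith [pi_pos]) (by fun_prop)
    (fun y _ ↦ hnonneg y) ?_
  by_contra! hnonpos
  have hzero (y : ℝ) (hy : y ∈ Icc (-π) π) : cos y = 0 ∨ f y = f (π / 2) := by
    rw [← sub_eq_zero (a := f y), ← mul_eq_zero]
    exact (hnonpos y hy).antisymm (hnonneg y)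
  have hzero_at_zero : f 0 = f (π / 2) := by
    simpa using hzero 0 ⟨by linarith [pi_pos], pi_pos.le⟩
  have hzero_at_pi : f π = f (π / 2) := by
    simpa using hzero π ⟨by linarith [pi_pos], le_rfl⟩
  obtain ⟨x, hx, hfx⟩ := hne
  have hcos : cos x = 0 := (hzero x hx).resolve_right hfx
  refine hfx (le_antisymm ?_ ?_)
  · rw [← hzero_at_zero]
    exact hmono (by simp [hcos])
  · rw [← hzero_at_pi]
    exact hmono (by simp [hcos])

end IncreasingInCos

section Convolution

variable {k f h : ℝ → ℝ} {a b y : ℝ}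

lemma ae_sin_sub_ne_zero (a : ℝ) : ∀ᵐ y : ℝ, sin (a - y) ≠ 0 := by
  filter_upwards [(countable_range fun k : ℤ ↦ a - k * π).ae_notMem volume] with y hy hsin
  obtain ⟨k, hk⟩ := sin_eq_zero_iff.1 hsin
  exact hy ⟨k, by linarith⟩

lemma cos_ne_one_of_sin_ne_zero (hy : sin y ≠ 0) : cos y ≠ 1 := fun h ↦
  hy (by nlinarith [sin_sq_add_cos_sq y, sq_nonneg (sin y)])

lemma cos_sub_cos_mul_pos (ha : -π ≤ a) (hb : b ≤ 0) (hab : a < b)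
    (hy : sin ((a + b) / 2 - y) ≠ 0) :
    0 < (cos (b - y) - cos (a - y)) * (cos y - cos (a + b - y)) := by
  have hmid : sin ((a + b) / 2) < 0 :=
    sin_neg_of_neg_of_neg_pi_lt (by linarith) (by linarith)
  have hhalf : 0 < sin ((b - a) / 2) :=
    sin_pos_of_pos_of_lt_pi (by linarith) (by linarith [pi_pos])
  have hprod : (cos (b - y) - cos (a - y)) * (cos y - cos (a + b - y)) =
      4 * sin ((a + b) / 2 - y) ^ 2 * (sin ((b - a) / 2) * -sin ((a + b) / 2)) := by
    rw [cos_sub_cos, cos_sub_cos, show (b - y + (a - y)) / 2 = (a + b) / 2 - y by ring,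
      show (b - y - (a - y)) / 2 = (b - a) / 2 by ring,
      show (y + (a + b - y)) / 2 = (a + b) / 2 by ring,
      show (y - (a + b - y)) / 2 = -((a + b) / 2 - y) by ring, sin_neg]
    ring
  have := neg_pos.2 hmid
  rw [hprod]
  positivity

lemma integral_comp_sub_left_of_periodic (hh : Function.Periodic h (2 * π)) (s : ℝ) :
    ∫ y in (-π)..π, h (s - y) = ∫ y in (-π)..π, h y := by
  have hshift := hh.intervalIntegral_add_eq (s - π) (-π)
  rw [show s - π + 2 * π = s + π by ring, show -π + 2 * π = π by ring] at hshift
  rw [intervalIntegral.integral_comp_sub_left, sub_neg_eq_add, hshift]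

lemma two_mul_integral_mul_of_antisymm {s : ℝ} (hh : ∀ y, h (s - y) = -h y)
    (hper : Function.Periodic (fun y ↦ h y * f y) (2 * π))
    (hint : IntervalIntegrable h volume (-π) π) (hf : Continuous f) :
    2 * ∫ y in (-π)..π, h y * f y = ∫ y in (-π)..π, h y * (f y - f (s - y)) := by
  have hreflect := integral_comp_sub_left_of_periodic hper s
  simp_rw [hh, neg_mul] at hreflect
  rw [intervalIntegral.integral_neg] at hreflect
  simp_rw [mul_sub]
  rw [intervalIntegral.integral_sub (hint.mul_continuousOn (by fun_prop))
    (hint.mul_continuousOn (by fun_prop))]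
  linarith

lemma intervalIntegrable_comp_sub_left (hk : ∀ a b, IntervalIntegrable k volume a b)
    (x a b : ℝ) : IntervalIntegrable (fun y ↦ k (x - y)) volume a b := by
  simpa using (hk (x - a) (x - b)).comp_sub_left x

lemma monotoneOn_integral_comp_sub_mul (hk_even : k.Even) (hk_per : Function.Periodic k (2 * π))
    (hk_int : ∀ a b, IntervalIntegrable k volume a b) (hk_cos : MonovaryOn k cos {x | cos x ≠ 1})
    (hf : Continuous f) (hf_per : Function.Periodic f (2 * π)) (hf_cos : Monovary f cos) :
    MonotoneOn (fun x ↦ ∫ y in (-π)..π, k (x - y) * f y) (Icc (-π) 0) := by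
  refine monotoneOn_iff_forall_lt.2 fun a ha b hb hab ↦ ?_
  have hint (x : ℝ) := intervalIntegrable_comp_sub_left hk_int x (-π) π
  have hantisymm (y : ℝ) : k (b - (a + b - y)) - k (a - (a + b - y)) =
      -(k (b - y) - k (a - y)) := by
    rw [← hk_even (b - y), ← hk_even (a - y)]
    ring_nf
  have hper : Function.Periodic (fun y ↦ (k (b - y) - k (a - y)) * f y) (2 * π) := fun y ↦ by
    simp only [← sub_sub, hk_per.sub_eq, hf_per y]
  have hnonneg : 0 ≤ ∫ y in (-π)..π, (k (b - y) - k (a - y)) * (f y - f (a + b - y)) := by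
    refine intervalIntegral.integral_nonneg_of_ae (by linarith [pi_pos]) ?_
    filter_upwards [ae_sin_sub_ne_zero a, ae_sin_sub_ne_zero b, ae_sin_sub_ne_zero ((a + b) / 2)]
      with y hya hyb hymid
    have hksign := hk_cos.sub_mul_sub_nonneg (cos_ne_one_of_sin_ne_zero hya)
      (cos_ne_one_of_sin_ne_zero hyb)
    have hfsign := hf_cos.sub_mul_sub_nonneg (a + b - y) y
    refine nonneg_of_mul_nonneg_left ?_ (cos_sub_cos_mul_pos ha.1 hb.2 hab hymid)
    linarith [mul_nonneg hksign hfsign]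
  rw [← two_mul_integral_mul_of_antisymm hantisymm hper ((hint b).sub (hint a)) hf] at hnonneg
  simp_rw [sub_mul] at hnonneg
  rw [intervalIntegral.integral_sub ((hint b).mul_continuousOn hf.continuousOn)
    ((hint a).mul_continuousOn hf.continuousOn)] at hnonneg
  linarith

end Convolution

section SteadySolution

variable {α c : ℝ} {n φ : ℝ → ℝ}

lemma integral_cos_sub_mul_of_even (hφ : Continuous φ) (heven : φ.Even) (x : ℝ) :
    ∫ y in (-π)..π, cos (x - y) * φ y = cos x * ∫ y in (-π)..π, cos y * φ y := by
  have hsin : ∫ y in (-π)..π, sin y * φ y = 0 := by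
    have hreflect := intervalIntegral.integral_comp_neg (a := -π) (b := π) fun y ↦ sin y * φ y
    simp only [sin_neg, heven _, neg_neg, neg_mul, intervalIntegral.integral_neg] at hreflect
    linarith
  simp_rw [cos_sub, add_mul, mul_assoc]
  rw [intervalIntegral.integral_add (Continuous.intervalIntegrable (by fun_prop) _ _)
    (Continuous.intervalIntegrable (by fun_prop) _ _), intervalIntegral.integral_const_mul,
    intervalIntegral.integral_const_mul, hsin, mul_zero, add_zero]

lemma exists_ne_of_integral_eq_zero (hper : Function.Periodic φ (2 * π))
    (hmean : ∫ y in (-π)..π, φ y = 0) (hnt : ∃ x, φ x ≠ 0) (C : ℝ) :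
    ∃ x ∈ Icc (-π) π, φ x ≠ C := by
  by_contra! hconst
  have hC : C = 0 := by
    have hle : -π ≤ π := by linarith [pi_pos]
    rw [intervalIntegral.integral_congr (g := fun _ ↦ C) (by rwa [uIcc_of_le hle]),
      intervalIntegral.integral_const, smul_eq_mul] at hmean
    exact (mul_eq_zero.1 hmean).resolve_left (by linarith [pi_pos])
  obtain ⟨x, hx⟩ := hnt
  obtain ⟨y, hy, hxy⟩ := hper.exists_mem_Ico two_pi_pos x (-π)
  rw [show -π + 2 * π = π by ring] at hy
  exact hx (hxy.trans ((hconst y (Ico_subset_Icc_self hy)).trans hC))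

theorem IsSteadySolution.exists_monotoneOn_sub_cos (hα : 0 < α) (hφ : IsSteadySolution α c n φ)
    (hnt : ∃ x, φ x ≠ 0) (heven : φ.Even) (hmono : Monovary φ cos) :
    ∃ m > 0, MonotoneOn (fun x ↦ c * φ x - n (φ x) - m * cos x) (Icc (-π) 0) := by
  obtain ⟨hcont, hper, hmean, hsteady⟩ := hφ
  obtain ⟨κ, hκ, hker⟩ := exists_monovaryOn_Kker_sub_cos hα
  have hpos : 0 < ∫ y in (-π)..π, cos y * φ y :=
    integral_cos_mul_pos hcont hmono (exists_ne_of_integral_eq_zero hper hmean hnt _)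
  refine ⟨κ * ∫ y in (-π)..π, cos y * φ y, mul_pos hκ hpos, ?_⟩
  have hconv := monotoneOn_integral_comp_sub_mul
    (fun x ↦ by simp only [even_Kker α x, cos_neg])
    (fun x ↦ by simp only [periodic_Kker α x, cos_add_two_pi])
    (fun a b ↦ (intervalIntegrable_Kker hα a b).sub
      (Continuous.intervalIntegrable (by fun_prop) a b)) hker hcont hper hmono
  have hvalue (x : ℝ) : ∫ y in (-π)..π, (Kker α (x - y) - κ * cos (x - y)) * φ y =
      c * φ x - n (φ x) - (κ * ∫ y in (-π)..π, cos y * φ y) * cos x +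
        1 / (2 * π) * ∫ y in (-π)..π, n (φ y) := by
    simp_rw [sub_mul, mul_assoc]
    rw [intervalIntegral.integral_sub
      ((intervalIntegrable_comp_sub_left (intervalIntegrable_Kker hα) x _ _).mul_continuousOn
        hcont.continuousOn) (Continuous.intervalIntegrable (by fun_prop) _ _),
      intervalIntegral.integral_const_mul, integral_cos_sub_mul_of_even hcont heven, hsteady]
    ring
  intro a ha b hb hab
  have hle := hconv ha hb hab
  simp only [hvalue] at hle
  linarith

end SteadySolution

section NodalPattern

variable {c m x : ℝ} {n n' φ : ℝ → ℝ}

lemma deriv_nonneg_of_isMinOn_Icc_left {f : ℝ → ℝ} {f' a b : ℝ} (hab : a < b)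
    (hmin : IsMinOn f (Icc a b) a) (hf : HasDerivAt f f' a) : 0 ≤ f' := by
  have hcone : b - a ∈ posTangentConeAt (Icc a b) a :=
    sub_mem_posTangentConeAt_of_segment_subset (segment_eq_Icc hab.le).subset
  have hdir : 0 ≤ (b - a) * f' := by
    simpa using hmin.localize.hasFDerivWithinAt_nonneg hf.hasFDerivAt.hasFDerivWithinAt hcone
  exact nonneg_of_mul_nonneg_right hdir (sub_pos.2 hab)

lemma deriv_nonpos_of_isMinOn_Icc_right {f : ℝ → ℝ} {f' a b : ℝ} (hab : a < b)
    (hmin : IsMinOn f (Icc a b) b) (hf : HasDerivAt f f' b) : f' ≤ 0 := by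
  have hcone : a - b ∈ posTangentConeAt (Icc a b) b :=
    sub_mem_posTangentConeAt_of_segment_subset (by rw [segment_symm, segment_eq_Icc hab.le])
  have hdir : 0 ≤ (a - b) * f' := by
    simpa using hmin.localize.hasFDerivWithinAt_nonneg hf.hasFDerivAt.hasFDerivWithinAt hcone
  exact nonpos_of_mul_nonneg_right hdir (sub_neg.2 hab)

lemma hasDerivAt_mul_of_eq_zero {f g : ℝ → ℝ} {g' a : ℝ} (hf : ContinuousAt f a)
    (hg : HasDerivAt g g' a) (hga : g a = 0) : HasDerivAt (fun x ↦ f x * g x) (f a * g') a := by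
  rw [hasDerivAt_iff_tendsto_slope] at hg ⊢
  refine ((hf.tendsto.mono_left nhdsWithin_le_nhds).mul hg).congr fun x ↦ ?_
  simp only [slope_def_field, hga, mul_zero, sub_zero, mul_div_assoc]

lemma mul_deriv_add_mul_sin_nonneg (hx : x ∈ Ioo (-π) 0) (hn : HasDerivAt n (n' (φ x)) (φ x))
    (hφ : DifferentiableAt ℝ φ x)
    (hgrowth : MonotoneOn (fun x ↦ c * φ x - n (φ x) - m * cos x) (Icc (-π) 0)) :
    0 ≤ (c - n' (φ x)) * deriv φ x + m * sin x := by
  have hderiv : HasDerivAt (fun x ↦ c * φ x - n (φ x) - m * cos x)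
      (c * deriv φ x - n' (φ x) * deriv φ x - m * -sin x) x :=
    ((hφ.hasDerivAt.const_mul c).sub (hn.comp x hφ.hasDerivAt)).sub
      ((hasDerivAt_cos x).const_mul m)
  have hnonneg := (hgrowth.mono Ioo_subset_Icc_self).derivWithin_nonneg (x := x)
  rw [derivWithin_of_isOpen isOpen_Ioo hx, hderiv.deriv] at hnonneg
  linarith

lemma deriv_pos_and_lt_of_monotoneOn_sub_cos (hm : 0 < m) (hmono : MonotoneOn φ (Ioo (-π) 0))
    (hgrowth : MonotoneOn (fun x ↦ c * φ x - n (φ x) - m * cos x) (Icc (-π) 0))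
    (hx : x ∈ Ioo (-π) 0) (hn : HasDerivAt n (n' (φ x)) (φ x)) (hφ : DifferentiableAt ℝ φ x) :
    0 < deriv φ x ∧ n' (φ x) < c := by
  have hsin : 0 < m * -sin x :=
    mul_pos hm (neg_pos.2 (sin_neg_of_neg_of_neg_pi_lt hx.2 hx.1))
  have hprod : 0 < (c - n' (φ x)) * deriv φ x := by
    linarith [mul_deriv_add_mul_sin_nonneg hx hn hφ hgrowth]
  have hderiv : 0 ≤ deriv φ x := by
    rw [← derivWithin_of_isOpen isOpen_Ioo hx]
    exact hmono.derivWithin_nonneg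
  have hlt : 0 < c - n' (φ x) := pos_of_mul_pos_left hprod hderiv
  exact ⟨pos_of_mul_pos_right hprod hlt.le, sub_pos.1 hlt⟩

lemma strictMonoOn_of_monotoneOn_sub_cos (hm : 0 < m) (hmono : MonotoneOn φ (Icc (-π) 0))
    (hgrowth : MonotoneOn (fun x ↦ c * φ x - n (φ x) - m * cos x) (Icc (-π) 0)) :
    StrictMonoOn φ (Icc (-π) 0) := fun a ha b hb hab ↦ by
  refine (hmono ha hb hab.le).lt_of_ne fun heq ↦ ?_
  have hle := hgrowth ha hb hab.le
  simp only [heq] at hle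
  linarith [mul_lt_mul_of_pos_left (strictMonoOn_cos_Icc_neg_pi_zero ha hb hab) hm]

lemma isMinOn_mul_deriv_add_mul_sin (hn : ∀ x, HasDerivAt n (n' x) x)
    (hφ : DifferentiableOn ℝ φ (Ioo (-π) 0)) (hderiv_zero : deriv φ 0 = 0)
    (hderiv_neg_pi : deriv φ (-π) = 0)
    (hgrowth : MonotoneOn (fun x ↦ c * φ x - n (φ x) - m * cos x) (Icc (-π) 0))
    (hx : x = -π ∨ x = 0) :
    IsMinOn (fun x ↦ (c - n' (φ x)) * deriv φ x + m * sin x) (Icc (-π) 0) x := by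
  have hends : ∀ y, y = -π ∨ y = 0 → (c - n' (φ y)) * deriv φ y + m * sin y = 0 := by
    rintro y (rfl | rfl)
    · simp [hderiv_neg_pi]
    · simp [hderiv_zero]
  refine isMinOn_iff.2 fun y hy ↦ ?_
  rw [hends x hx]
  rcases eq_endpoints_or_mem_Ioo_of_mem_Icc hy with h | h | h
  · exact (hends y (.inl h)).ge
  · exact (hends y (.inr h)).ge
  · exact mul_deriv_add_mul_sin_nonneg h (hn _) (hφ.differentiableAt (Ioo_mem_nhds h.1 h.2))
      hgrowth

lemma hasDerivAt_mul_deriv_add_mul_sin (hn' : Continuous n') (hφ : Continuous φ)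
    (hderiv : deriv φ x = 0) (hdiff : DifferentiableAt ℝ (deriv φ) x) :
    HasDerivAt (fun x ↦ (c - n' (φ x)) * deriv φ x + m * sin x)
      ((c - n' (φ x)) * deriv (deriv φ) x + m * cos x) x :=
  (hasDerivAt_mul_of_eq_zero (by fun_prop) hdiff.hasDerivAt hderiv).add
    ((hasDerivAt_sin x).const_mul m)

lemma forall_mem_Icc_le_of_forall_mem_Ioo_le {f : ℝ → ℝ} {a b : ℝ} (hab : a ≠ b) (hf : Continuous f)
    (hle : ∀ x ∈ Ioo a b, f x ≤ c) : ∀ x ∈ Icc a b, f x ≤ c := by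
  rw [← closure_Ioo hab]
  exact closure_minimal hle (isClosed_le hf continuous_const)

theorem lt_and_deriv_deriv_neg_and_deriv_deriv_pos (hm : 0 < m) (hn : ∀ x, HasDerivAt n (n' x) x)
    (hn' : Continuous n') (hcont : Continuous φ) (hφ : DifferentiableOn ℝ φ (Ioo (-π) 0))
    (hderiv_zero : deriv φ 0 = 0) (hderiv_neg_pi : deriv φ (-π) = 0)
    (hdiff_zero : DifferentiableAt ℝ (deriv φ) 0) (hdiff_neg_pi : DifferentiableAt ℝ (deriv φ) (-π))
    (hmono : MonotoneOn φ (Ioo (-π) 0))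
    (hgrowth : MonotoneOn (fun x ↦ c * φ x - n (φ x) - m * cos x) (Icc (-π) 0)) :
    (∀ x ∈ Icc (-π) 0, n' (φ x) < c) ∧ deriv (deriv φ) 0 < 0 ∧ 0 < deriv (deriv φ) (-π) := by
  have hpi : -π < 0 := neg_neg_of_pos pi_pos
  have hinterior (x : ℝ) (hx : x ∈ Ioo (-π) 0) : n' (φ x) < c :=
    (deriv_pos_and_lt_of_monotoneOn_sub_cos hm hmono hgrowth hx (hn _)
      (hφ.differentiableAt (Ioo_mem_nhds hx.1 hx.2))).2
  have hclosed := forall_mem_Icc_le_of_forall_mem_Ioo_le hpi.ne (hn'.comp hcont)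
    fun x hx ↦ (hinterior x hx).le
  have hle_zero : 0 ≤ c - n' (φ 0) := sub_nonneg.2 (hclosed 0 (right_mem_Icc.2 hpi.le))
  have hle_neg_pi : 0 ≤ c - n' (φ (-π)) := sub_nonneg.2 (hclosed (-π) (left_mem_Icc.2 hpi.le))
  have hprod_zero : 0 < (c - n' (φ 0)) * -deriv (deriv φ) 0 := by
    have := deriv_nonpos_of_isMinOn_Icc_right hpi
      (isMinOn_mul_deriv_add_mul_sin hn hφ hderiv_zero hderiv_neg_pi hgrowth (.inr rfl))
      (hasDerivAt_mul_deriv_add_mul_sin hn' hcont hderiv_zero hdiff_zero)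
    rw [cos_zero] at this
    linarith
  have hprod_neg_pi : 0 < (c - n' (φ (-π))) * deriv (deriv φ) (-π) := by
    have := deriv_nonneg_of_isMinOn_Icc_left hpi
      (isMinOn_mul_deriv_add_mul_sin hn hφ hderiv_zero hderiv_neg_pi hgrowth (.inl rfl))
      (hasDerivAt_mul_deriv_add_mul_sin hn' hcont hderiv_neg_pi hdiff_neg_pi)
    rw [cos_neg, cos_pi] at this
    linarith
  have hneg := pos_of_mul_pos_right hprod_zero hle_zero
  have hpos := pos_of_mul_pos_right hprod_neg_pi hle_neg_pi
  refine ⟨fun x hx ↦ ?_, neg_pos.1 hneg, hpos⟩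
  rcases eq_endpoints_or_mem_Ioo_of_mem_Icc hx with rfl | rfl | hx
  · exact sub_pos.1 (pos_of_mul_pos_left hprod_neg_pi hpos.le)
  · exact sub_pos.1 (pos_of_mul_pos_left hprod_zero hneg.le)
  · exact hinterior x hx

end NodalPattern

section Nonlinearities

variable {p : ℝ}

lemma hasDerivAt_nAbs (hp : 1 < p) (x : ℝ) : HasDerivAt (nAbs p) (nAbs' p x) x :=
  (hasDerivAt_abs_rpow x hp).congr_deriv (by rw [nAbs']; ring)

lemma continuous_nAbs' (hp : 1 < p) : Continuous (nAbs' p) := by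
  have hcont : ContDiff ℝ 1 (nAbs p) := contDiff_norm_rpow hp
  rw [show nAbs' p = deriv (nAbs p) from funext fun x ↦ (hasDerivAt_nAbs hp x).deriv.symm]
  exact hcont.continuous_deriv le_rfl

lemma continuous_abs_rpow_sub_one (hp : 1 ≤ p) : Continuous fun x : ℝ ↦ |x| ^ (p - 1) :=
  continuous_abs.rpow_const fun _ ↦ .inr (sub_nonneg.2 hp)

lemma continuous_nSgn' (hp : 1 ≤ p) : Continuous (nSgn' p) :=
  continuous_const.mul (continuous_abs_rpow_sub_one hp)

lemma hasDerivAt_nSgn (hp : 1 ≤ p) (x : ℝ) : HasDerivAt (nSgn p) (nSgn' p x) x := by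
  refine hasDerivAt_of_hasDerivAt_of_ne' (fun y hy ↦ ?_)
    (continuous_id.mul (continuous_abs_rpow_sub_one hp)).continuousAt
    (continuous_nSgn' hp).continuousAt x (x := 0)
  refine ((hasDerivAt_id y).mul ((hasDerivAt_abs hy).rpow_const
    (.inl (abs_ne_zero.2 hy)))).congr_deriv ?_
  have hsign : y * SignType.sign y = |y| := self_mul_sign y
  have hpow : |y| * |y| ^ (p - 1 - 1) = |y| ^ (p - 1) := by
    rw [rpow_sub_one (abs_ne_zero.2 hy) (p - 1), mul_div_cancel₀ _ (abs_ne_zero.2 hy)]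
  rw [nSgn', id]
  linear_combination (p - 1) * |y| ^ (p - 1 - 1) * hsign + (p - 1) * hpow

lemma hasDerivAt_and_continuous_of_nAbs_or_nSgn (hp : 1 < p) {n n' : ℝ → ℝ}
    (hn : (n = nAbs p ∧ n' = nAbs' p) ∨ (n = nSgn p ∧ n' = nSgn' p)) :
    (∀ x, HasDerivAt n (n' x) x) ∧ Continuous n' := by
  rcases hn with ⟨rfl, rfl⟩ | ⟨rfl, rfl⟩
  · exact ⟨hasDerivAt_nAbs hp, continuous_nAbs' hp⟩
  · exact ⟨hasDerivAt_nSgn hp.le, continuous_nSgn' hp.le⟩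

end Nonlinearities

lemma differentiableAt_deriv_of_exists_contDiffOn {f : ℝ → ℝ} {a : ℝ}
    (hf : ∃ U : Set ℝ, IsOpen U ∧ a ∈ U ∧ ContDiffOn ℝ 2 f U) : DifferentiableAt ℝ (deriv f) a := by
  obtain ⟨U, hU, ha, hfU⟩ := hf
  have hderiv : ContDiffOn ℝ 1 (deriv f) U := hfU.deriv_of_isOpen hU (by norm_num)
  exact (hderiv.differentiableOn one_ne_zero).differentiableAt (hU.mem_nhds ha)

theorem statement12_general {α c : ℝ} (hα : 0 < α) {n n' : ℝ → ℝ}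
    (hn : ∀ x, HasDerivAt n (n' x) x) (hn' : Continuous n') {φ : ℝ → ℝ}
    (hφ : IsSteadySolution α c n φ) (hnt : ∃ x, φ x ≠ 0) (heven : φ.Even)
    (hmono : MonotoneOn φ (Ioo (-π) 0)) :
    (∀ x ∈ Ioo (-π) 0, DifferentiableAt ℝ φ x → 0 < deriv φ x ∧ n' (φ x) < c) ∧
    (DifferentiableOn ℝ φ (Ioo (-π) 0) → DifferentiableAt ℝ (deriv φ) 0 →
      DifferentiableAt ℝ (deriv φ) (-π) →
      (∀ x, n' (φ x) < c) ∧ deriv (deriv φ) 0 < 0 ∧ 0 < deriv (deriv φ) (-π)) ∧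
    StrictMonoOn φ (Icc (-π) 0) := by
  obtain ⟨hcont, hper, -⟩ := id hφ
  have hmonoIcc := monotoneOn_Icc_of_monotoneOn_Ioo (neg_neg_of_pos pi_pos) hcont hmono
  have hcos {u v : ℝ} : cos u ≤ cos v → φ u ≤ φ v := apply_le_apply_of_cos_le heven hper hmonoIcc
  obtain ⟨m, hm, hgrowth⟩ :=
    hφ.exists_monotoneOn_sub_cos hα hnt heven fun u v huv ↦ hcos huv.le
  have hderiv_zero : deriv φ 0 = 0 := IsLocalMax.deriv_eq_zero <| .of_forall fun x ↦
    hcos (by simpa using cos_le_one x)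
  have hderiv_neg_pi : deriv φ (-π) = 0 := IsLocalMin.deriv_eq_zero <| .of_forall fun x ↦
    hcos (by simpa using neg_one_le_cos x)
  refine ⟨fun x hx ↦ deriv_pos_and_lt_of_monotoneOn_sub_cos hm hmono hgrowth hx (hn _), ?_,
    strictMonoOn_of_monotoneOn_sub_cos hm hmonoIcc hgrowth⟩
  intro hdiff hdiff_zero hdiff_neg_pi
  have hsigns := lt_and_deriv_deriv_neg_and_deriv_deriv_pos hm hn hn' hcont hdiff hderiv_zero
    hderiv_neg_pi hdiff_zero hdiff_neg_pi hmono hgrowth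
  refine ⟨fun x ↦ ?_, hsigns.2⟩
  rw [apply_eq_of_cos_eq heven hper (cos_neg_arccos_cos x).symm]
  exact hsigns.1 _ (neg_arccos_mem_Icc _)

/-- Nodal pattern for even, nontrivial steady solutions increasing
on `(−π, 0)`:
(a) if `φ ∈ C¹`, then `φ′ > 0` and `n′(φ) < c` on `(−π,0)`;
(b) if additionally `φ` is `C²` near `0` and near `−π`, then `n′(φ) < c` everywhere,
    `φ″(0) < 0` and `φ″(−π) > 0`;
(c) conversely, if `φ` is merely continuous and `n′(φ) ≤ c` everywhere, then `φ` is
    strictly increasing on `(−π, 0)`. -/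
theorem statement12 (α p c : ℝ) (hα : α ∈ Set.Ioo (0:ℝ) 1) (hp : 1 < p) (hc : 0 < c)
    (n n' : ℝ → ℝ)
    (hn : (n = nAbs p ∧ n' = nAbs' p) ∨ (n = nSgn p ∧ n' = nSgn' p))
    (φ : ℝ → ℝ) (hφ : IsSteadySolution α c n φ)
    (hnt : ∃ x, φ x ≠ 0) (heven : ∀ x, φ (-x) = φ x)
    (hmono : MonotoneOn φ (Set.Ioo (-π) 0)) :
    (ContDiff ℝ 1 φ → ∀ x ∈ Set.Ioo (-π) 0, 0 < deriv φ x ∧ n' (φ x) < c) ∧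
    (ContDiff ℝ 1 φ →
      (∃ U : Set ℝ, IsOpen U ∧ (0:ℝ) ∈ U ∧ ContDiffOn ℝ 2 φ U) →
      (∃ V : Set ℝ, IsOpen V ∧ -π ∈ V ∧ ContDiffOn ℝ 2 φ V) →
      (∀ x : ℝ, n' (φ x) < c) ∧ deriv (deriv φ) 0 < 0 ∧ 0 < deriv (deriv φ) (-π)) ∧
    ((∀ x : ℝ, n' (φ x) ≤ c) → StrictMonoOn φ (Set.Ioo (-π) 0)) := by
  obtain ⟨hderiv, hcont⟩ := hasDerivAt_and_continuous_of_nAbs_or_nSgn hp hn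
  obtain ⟨hfirst, hsecond, hstrict⟩ := statement12_general hα.1 hderiv hcont hφ hnt heven hmono
  exact ⟨fun hC1 x hx ↦ hfirst x hx (hC1.differentiable one_ne_zero x),
    fun hC1 hU hV ↦ hsecond (hC1.differentiable one_ne_zero).differentiableOn
      (differentiableAt_deriv_of_exists_contDiffOn hU)
      (differentiableAt_deriv_of_exists_contDiffOn hV),
    fun _ ↦ hstrict.mono Ioo_subset_Icc_self⟩
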